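/- Every semi-algebraic graph property is easily testable: for all integers k, t ≥ 1, all real polynomials f₁,…,f_t in 2k variables, and every Boolean function Φ : {true,false}^t → {true,false}, the graph property P consisting of all graphs G for which one can assign a point p_v ∈ ℝ^k to each vertex v ∈ V(G) so that two distinct vertices u,v are adjacent if and only if Φ( f₁(p_u,p_v) ≥ 0; … ; f_t(p_u,p_v) ≥ 0 ) = true, is easily testable. -/

import Mathlib

open scoped Classical
open Finset

noncomputable section

/-- Number of unordered vertex pairs on which two graphs on the same vertex set differ. -/
def editDist {n : ℕ} (G H : SimpleGraph (Fin n)) : ℕ :=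
  Set.ncard {e : Sym2 (Fin n) | (e ∈ G.edgeSet ∧ e ∉ H.edgeSet) ∨ (e ∉ G.edgeSet ∧ e ∈ H.edgeSet)}

/-- `G` is `ε`-far from satisfying the graph property `P`. -/
def Far (P : ∀ n : ℕ, Set (SimpleGraph (Fin n))) {n : ℕ} (G : SimpleGraph (Fin n)) (ε : ℝ) : Prop :=
  ∀ H : SimpleGraph (Fin n), H ∈ P n → ε * (n : ℝ) ^ 2 ≤ (editDist G H : ℝ)

/-- The subgraph induced by a vertex subset `Q` of size `m`, as a graph on `Fin m`. -/
def inducedOn {n : ℕ} (G : SimpleGraph (Fin n)) {m : ℕ} (Q : Finset (Fin n))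
    (h : Q.card = m) : SimpleGraph (Fin m) :=
  G.comap fun i => ((Q.orderIsoOfFin h) i : Fin n)

/-- A graph property is easily testable if for some constant `c > 0`, for every `ε ∈ (0,1/2)`
and every graph on at least `ε ^ (-c)` vertices which is `ε`-far from `P`, at least a
`2/3`-fraction of the `⌈ε ^ (-c)⌉`-element vertex subsets induce a subgraph not satisfying `P`. -/
def EasilyTestable (P : ∀ n : ℕ, Set (SimpleGraph (Fin n))) : Prop :=
  ∃ c : ℝ, 0 < c ∧ ∀ ε : ℝ, 0 < ε → ε < 1 / 2 → ∀ n : ℕ, ∀ G : SimpleGraph (Fin n),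
    ε ^ (-c) ≤ (n : ℝ) → Far P G ε →
    (2 / 3 : ℝ) * (((Finset.univ : Finset (Fin n)).powersetCard ⌈ε ^ (-c)⌉₊).card : ℝ) ≤
      ((((Finset.univ : Finset (Fin n)).powersetCard ⌈ε ^ (-c)⌉₊).filter
        fun Q => ∃ h : Q.card = ⌈ε ^ (-c)⌉₊, inducedOn G Q h ∉ P ⌈ε ^ (-c)⌉₊).card : ℝ)

/-- The property of being induced `𝓕`-free. -/
def InducedFree (𝓕 : Set (Σ k : ℕ, SimpleGraph (Fin k))) : ∀ n : ℕ, Set (SimpleGraph (Fin n)) :=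
  fun n => {G | ∀ p ∈ 𝓕, IsEmpty (p.2 ↪g G)}

/-- A graph is bipartite: its vertex set can be partitioned into two independent sets. -/
def IsBipGraph {V : Type*} (H : SimpleGraph V) : Prop :=
  ∃ A : Set V, (∀ u ∈ A, ∀ v ∈ A, ¬ H.Adj u v) ∧ (∀ u ∉ A, ∀ v ∉ A, ¬ H.Adj u v)

/-- A graph is co-bipartite: its vertex set can be partitioned into two cliques. -/
def IsCoBipGraph {V : Type*} (H : SimpleGraph V) : Prop :=
  ∃ A : Set V, (∀ u ∈ A, ∀ v ∈ A, u ≠ v → H.Adj u v) ∧ (∀ u ∉ A, ∀ v ∉ A, u ≠ v → H.Adj u v)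

/-- A graph is split: its vertex set can be partitioned into a clique and an independent set. -/
def IsSplitGraph {V : Type*} (H : SimpleGraph V) : Prop :=
  ∃ A : Set V, (∀ u ∈ A, ∀ v ∈ A, u ≠ v → H.Adj u v) ∧ (∀ u ∉ A, ∀ v ∉ A, ¬ H.Adj u v)

/-- The semi-algebraic graph property determined by the polynomials `f i` (in `2k` variables,
the first `k` indexed by `Sum.inl` and the last `k` by `Sum.inr`) and the Boolean function `Φ`:
a graph satisfies it iff one can assign a point `p v ∈ ℝ^k` to each vertex `v` so that two
distinct vertices `u, v` are adjacent iff `Φ (f₁(p_u,p_v) ≥ 0, …, f_t(p_u,p_v) ≥ 0) = true`. -/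
def SemiAlgebraicProp (k t : ℕ) (f : Fin t → MvPolynomial (Fin k ⊕ Fin k) ℝ)
    (Φ : (Fin t → Bool) → Bool) : ∀ n : ℕ, Set (SimpleGraph (Fin n)) :=
  fun n => {G | ∃ p : Fin n → (Fin k → ℝ), ∀ u v : Fin n, u ≠ v →
    (G.Adj u v ↔
      Φ (fun i => decide (0 ≤ MvPolynomial.eval (Sum.elim (p u) (p v)) (f i))) = true)}

/-!
Call a vertex placed in a cyclically ordered block of vertices a *head*, and the next vertex of the
block which a sequence of anchor vertices does not distinguish from it its *mate*. Mapping every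
vertex `v` to the mate which `v` has in a random block of a random representable sample, and pulling
the representation back along this map, gives a representable graph on the whole vertex set. It is
close to the original graph, since mapping a random pair to its mates mostly preserves adjacency:

* Adding an anchor which separates a vertex from its mate halves the number of vertices of the
  block indistinguishable from one of the two. This happens to a vertex only logarithmically often,
  so some level `l` exists at which the next anchor rarely separates a head from its mate with
  respect to the first `l` anchors.
* By exchangeability, the head of another block, and the mate of that head, separate a head from
  its mate as rarely as the next anchor does, so replacing two heads by their mates, one after the
  other, rarely changes their adjacency.
* Vertices of a representable graph are adjacent to the anchors in only polynomially many ways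
  (linearise the polynomials and apply Sauer–Shelah), so few vertices of a large block lack a mate.

Hence a graph far from representable has few representable samples.
-/

/-! ### Relations with polynomial growth -/

section Growth

variable {X Y X' Y' ι : Type*}

/-- `R` has polynomial growth of exponent `D` if every `L` elements `y` of `Y` are cut out by the
elements of `X` in at most `(L + 1) ^ D` ways (the dual shatter function of `R` is polynomial). -/
def PolynomialGrowth (R : X → Y → Prop) (D : ℕ) : Prop :=
  ∀ (L : ℕ) (y : Fin L → Y), (Set.range fun x l ↦ R x (y l)).ncard ≤ (L + 1) ^ D

theorem PolynomialGrowth.comap {R : X → Y → Prop} {D : ℕ} (hR : PolynomialGrowth R D)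
    (g : X' → X) (h : Y' → Y) : PolynomialGrowth (fun x y ↦ R (g x) (h y)) D := fun L y ↦
  (Set.ncard_le_ncard (Set.range_comp_subset_range g fun x l ↦ R x (h (y l)))
    (Set.toFinite _)).trans (hR L (h ∘ y))

theorem PolynomialGrowth.bool [Fintype ι] {R : ι → X → Y → Prop} [∀ i x y, Decidable (R i x y)]
    {D : ι → ℕ} (hR : ∀ i, PolynomialGrowth (R i) (D i)) (Φ : (ι → Bool) → Bool) :
    PolynomialGrowth (fun x y ↦ Φ (fun i ↦ decide (R i x y)) = true) (∑ i, D i) := by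
  intro L y
  let S (i : ι) : Set (Fin L → Prop) := Set.range fun x l ↦ R i x (y l)
  let combine (a : ι → Fin L → Prop) (l : Fin L) : Prop := Φ (fun i ↦ decide (a i l)) = true
  have hsub : (Set.range fun x l ↦ Φ (fun i ↦ decide (R i x (y l))) = true) ⊆
      combine '' Set.univ.pi S := by
    rintro _ ⟨x, rfl⟩
    exact ⟨fun i l ↦ R i x (y l), fun i _ ↦ ⟨x, rfl⟩, by funext l; simp only [combine]; congr!⟩
  have hcard : (Set.univ.pi S).ncard = ∏ i, (S i).ncard := by
    simp_rw [← Nat.card_coe_set_eq, Nat.card_congr (Equiv.Set.univPi S), Nat.card_pi]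
  calc _ ≤ (combine '' Set.univ.pi S).ncard := Set.ncard_le_ncard hsub (Set.toFinite _)
    _ ≤ (Set.univ.pi S).ncard := Set.ncard_image_le (Set.toFinite _)
    _ = ∏ i, (S i).ncard := hcard
    _ ≤ ∏ i, (L + 1) ^ D i := Finset.prod_le_prod' fun i _ ↦ hR i L y
    _ = (L + 1) ^ ∑ i, D i := Finset.prod_pow_eq_pow_sum _ _ _

theorem sum_choose_le (L D : ℕ) : ∑ i ∈ Iic D, L.choose i ≤ (L + 1) ^ D := by
  rw [add_pow, ← Nat.range_succ_eq_Iic]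
  refine sum_le_sum fun i hi ↦ ?_
  rw [one_pow, mul_one]
  exact (Nat.choose_le_pow L i).trans <| Nat.le_mul_of_pos_right _ <|
    Nat.choose_pos (Nat.lt_succ_iff.1 (mem_range.1 hi))

theorem polynomialGrowth_of_shatters {R : X → Y → Prop} {D : ℕ}
    (h : ∀ (L : ℕ) (y : Fin L → Y) (s : Finset (Fin L)),
      (∀ t ⊆ s, ∃ x, ∀ l ∈ s, R x (y l) ↔ l ∈ t) → #s ≤ D) : PolynomialGrowth R D := by
  intro L y
  let 𝒜 : Finset (Finset (Fin L)) := {s | ∃ x, s = ({l | R x (y l)} : Finset (Fin L))}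
  have hrange : (Set.range fun x l ↦ R x (y l)) ⊆
      (fun s l ↦ l ∈ s) '' (𝒜 : Set (Finset (Fin L))) := by
    rintro _ ⟨x, rfl⟩
    exact ⟨({l | R x (y l)} : Finset (Fin L)), by simpa [𝒜] using ⟨x, rfl⟩, by simp⟩
  have hvc : 𝒜.vcDim ≤ D := by
    refine Finset.sup_le fun s hs ↦ h L y s fun t ht ↦ ?_
    obtain ⟨u, hu, hsu⟩ := mem_shatterer.1 hs ht
    obtain ⟨x, rfl⟩ := (mem_filter.1 hu).2
    exact ⟨x, fun l hl ↦ by simp [← hsu, hl]⟩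
  calc _ ≤ ((fun s l ↦ l ∈ s) '' (𝒜 : Set (Finset (Fin L)))).ncard :=
        Set.ncard_le_ncard hrange (Set.toFinite _)
    _ ≤ #𝒜 := (Set.ncard_image_le (Set.toFinite _)).trans_eq (Set.ncard_coe_finset 𝒜)
    _ ≤ #𝒜.shatterer := card_le_card_shatterer 𝒜
    _ ≤ ∑ i ∈ Iic 𝒜.vcDim, (Fintype.card (Fin L)).choose i := card_shatterer_le_sum_vcDim
    _ ≤ (L + 1) ^ 𝒜.vcDim := by simpa only [Fintype.card_fin] using sum_choose_le L 𝒜.vcDim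
    _ ≤ (L + 1) ^ D := Nat.pow_le_pow_right L.succ_pos hvc

theorem exists_sum_smul_eq_zero_of_not_linearIndependent {K M : Type*} [Field K] [LinearOrder K]
    [IsStrictOrderedRing K] [AddCommGroup M] [Module K M] [Fintype ι] {v : ι → M}
    (hv : ¬ LinearIndependent K v) : ∃ g : ι → K, ∑ i, g i • v i = 0 ∧ ∃ i, g i < 0 := by
  obtain ⟨g, hg, i, hi⟩ := Fintype.not_linearIndependent_iff.1 hv
  rcases lt_or_gt_of_ne hi with hi | hi
  · exact ⟨g, hg, i, hi⟩
  · exact ⟨-g, by simp [hg], i, by simpa using hi⟩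

theorem linearIndependent_of_shatters {K σ : Type*} [Field K] [LinearOrder K]
    [IsStrictOrderedRing K] [Fintype σ] [Finite ι] {b : ι → σ → K}
    (h : ∀ t : Set ι, ∃ a : σ → K, ∀ i, 0 ≤ a ⬝ᵥ b i ↔ i ∈ t) : LinearIndependent K b := by
  cases nonempty_fintype ι
  by_contra hdep
  obtain ⟨g, hg, i₀, hi₀⟩ := exists_sum_smul_eq_zero_of_not_linearIndependent hdep
  obtain ⟨a, ha⟩ := h {i | 0 ≤ g i}
  have hneg {i : ι} (hi : g i < 0) : 0 < g i * (a ⬝ᵥ b i) :=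
    mul_pos_of_neg_of_neg hi (not_le.1 fun h' ↦ hi.not_ge ((ha i).1 h'))
  have hzero : ∑ i, g i * (a ⬝ᵥ b i) = 0 := by
    simp_rw [← smul_eq_mul, ← dotProduct_smul, ← dotProduct_sum, hg, dotProduct_zero]
  refine (sum_pos' (fun i _ ↦ ?_) ⟨i₀, mem_univ _, hneg hi₀⟩).ne' hzero
  rcases lt_or_ge (g i) 0 with hi | hi
  · exact (hneg hi).le
  · exact mul_nonneg hi ((ha i).2 hi)

theorem polynomialGrowth_dotProduct_nonneg {K σ : Type*} [Field K] [LinearOrder K]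
    [IsStrictOrderedRing K] [Fintype σ] :
    PolynomialGrowth (fun a b : σ → K ↦ 0 ≤ a ⬝ᵥ b) (Fintype.card σ) := by
  refine polynomialGrowth_of_shatters fun L b s hs ↦ ?_
  have hli : LinearIndependent K fun l : s ↦ b l := linearIndependent_of_shatters fun t ↦ by
    obtain ⟨a, ha⟩ := hs (s.filter fun l ↦ l ∈ Subtype.val '' t) (filter_subset _ _)
    exact ⟨a, fun l ↦ by simp [ha l l.2]⟩
  simpa using hli.fintype_card_le_finrank

theorem polynomialGrowth_eval_nonneg {K σ τ : Type*} [Field K] [LinearOrder K]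
    [IsStrictOrderedRing K] [Finite σ] [Finite τ] (f : MvPolynomial (σ ⊕ τ) K) :
    PolynomialGrowth (fun (x : σ → K) (y : τ → K) ↦ 0 ≤ MvPolynomial.eval (Sum.elim x y) f)
      #f.support := by
  cases nonempty_fintype σ
  cases nonempty_fintype τ
  have eval_eq_dotProduct (x : σ → K) (y : τ → K) : MvPolynomial.eval (Sum.elim x y) f =
      (fun d : f.support ↦ f.coeff d * ∏ i, x i ^ d.1 (Sum.inl i)) ⬝ᵥ
        fun d ↦ ∏ j, y j ^ d.1 (Sum.inr j) := by
    simp [MvPolynomial.eval_eq', dotProduct, ← sum_coe_sort f.support, mul_assoc]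
  simp_rw [eval_eq_dotProduct, ← Fintype.card_coe f.support]
  exact polynomialGrowth_dotProduct_nonneg.comap _ _

end Growth

/-! ### Averages over finite sample spaces -/

open scoped BigOperators

section Prob

variable {Ω ι W X : Type*} [Fintype Ω] [Fintype ι] [Fintype W] [Fintype X]

/-- The probability that a uniformly random element of the finite type `Ω` satisfies `p`. It is `0`
when `Ω` is empty. -/
def prob (p : Ω → Prop) : ℝ := 𝔼 ω, if p ω then 1 else 0

theorem prob_le_one (p : Ω → Prop) : prob p ≤ 1 := by
  rcases isEmpty_or_nonempty Ω with _ | _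
  · simp [prob]
  · exact expect_le univ_nonempty fun ω _ ↦ by split_ifs <;> simp

theorem prob_mono {p q : Ω → Prop} (h : ∀ ω, p ω → q ω) : prob p ≤ prob q :=
  expect_le_expect fun ω _ ↦ by
    by_cases hp : p ω
    · simp [hp, h ω hp]
    · split_ifs <;> simp

theorem prob_or_le (p q : Ω → Prop) : prob (fun ω ↦ p ω ∨ q ω) ≤ prob p + prob q := by
  simp_rw [prob, ← expect_add_distrib]
  refine expect_le_expect fun ω _ ↦ ?_
  by_cases hp : p ω <;> by_cases hq : q ω <;> simp [hp, hq]

theorem prob_exists_le (p : X → Ω → Prop) : prob (fun ω ↦ ∃ x, p x ω) ≤ ∑ x, prob (p x) := by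
  simp_rw [prob, ← expect_sum_comm]
  refine expect_le_expect fun ω _ ↦ ?_
  split_ifs with h
  · obtain ⟨x, hx⟩ := h
    calc (1 : ℝ) = if p x ω then 1 else 0 := (if_pos hx).symm
      _ ≤ _ := single_le_sum (f := fun x ↦ if p x ω then (1 : ℝ) else 0)
        (fun _ _ ↦ by split_ifs <;> simp) (mem_univ x)
  · exact sum_nonneg fun _ _ ↦ by split_ifs <;> simp

theorem prob_comp {T : Ω → Ω} (hT : T.Injective) (p : Ω → Prop) :
    prob (fun ω ↦ p (T ω)) = prob p :=
  Fintype.expect_bijective T (Finite.injective_iff_bijective.1 hT) _ _ fun _ ↦ rfl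

theorem sum_prob_le {p : X → Ω → Prop} [∀ x, DecidablePred (p x)] {T : X → Ω → Ω}
    (hT : ∀ x, (T x).Injective) {C : ℕ} (h : ∀ ω, #{x | p x (T x ω)} ≤ C) :
    ∑ x, prob (p x) ≤ C := by
  simp_rw [← fun x ↦ prob_comp (hT x) (p x), prob, ← expect_sum_comm]
  rcases isEmpty_or_nonempty Ω with _ | _
  · simp
  · refine expect_le univ_nonempty fun ω _ ↦ ?_
    convert Nat.cast_le (α := ℝ).2 (h ω)
    rw [card_filter, Nat.cast_sum]
    exact sum_congr rfl fun x _ ↦ by split_ifs <;> simp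

theorem expect_update [DecidableEq ι] (i : ι) (F : (ι → W) → ℝ) :
    𝔼 ω : ι → W, 𝔼 u, F (Function.update ω i u) = 𝔼 ω, F ω := by
  rcases isEmpty_or_nonempty W with _ | _
  · have : IsEmpty (ι → W) := ⟨fun ω ↦ isEmptyElim (ω i)⟩
    simp
  let swap (x : (ι → W) × W) : (ι → W) × W := (Function.update x.1 i x.2, x.1 i)
  have hswap : swap.Involutive := fun x ↦ by simp [swap]
  calc _ = 𝔼 x : (ι → W) × W, F (swap x).1 := by
        rw [← univ_product_univ, expect_product]
    _ = 𝔼 x : (ι → W) × W, F x.1 := Fintype.expect_equiv hswap.toPerm _ _ fun _ ↦ rfl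
    _ = 𝔼 ω, F ω := by simp [← univ_product_univ, expect_product]

theorem expect_eval_pair [DecidableEq ι] [Nonempty W] {i j : ι} (hij : i ≠ j) (F : W → W → ℝ) :
    𝔼 ω : ι → W, F (ω i) (ω j) = 𝔼 x, 𝔼 y, F x y := by
  rw [← expect_update j, ← expect_update i]
  simp only [Function.update_self, Function.update_of_ne hij, Fintype.expect_const]

theorem prob_eval_eq_eval [DecidableEq ι] [Nonempty W] {i j : ι} (hij : i ≠ j) :
    prob (fun ω : ι → W ↦ ω i = ω j) = 1 / Fintype.card W := by
  rw [prob, expect_eval_pair hij fun x y ↦ if x = y then 1 else 0]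
  simp

end Prob

/-! ### Mates on a cycle -/

section Mate

variable {N : ℕ} [NeZero N] {Λ : Type*}

theorem exists_pos_apply_add_eq (c : ZMod N → Λ) (x : ZMod N) :
    ∃ d : ℕ, 0 < d ∧ c (x + d) = c x :=
  ⟨N, NeZero.pos N, by simp⟩

/-- The number of steps needed to walk from `x` along the cycle `ZMod N` to the next element of the
colour of `x`. It is `N` when no other element has this colour. -/
def returnTime (c : ZMod N → Λ) (x : ZMod N) : ℕ := Nat.find (exists_pos_apply_add_eq c x)

/-- The next element after `x` on the cycle `ZMod N` with the colour of `x`. It is `x` itself when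
no other element has this colour. -/
def nextMate (c : ZMod N → Λ) (x : ZMod N) : ZMod N := x + returnTime c x

theorem returnTime_pos (c : ZMod N → Λ) (x : ZMod N) : 0 < returnTime c x :=
  (Nat.find_spec (exists_pos_apply_add_eq c x)).1

theorem apply_nextMate (c : ZMod N → Λ) (x : ZMod N) : c (nextMate c x) = c x :=
  (Nat.find_spec (exists_pos_apply_add_eq c x)).2

theorem returnTime_le {c : ZMod N → Λ} {x : ZMod N} {d : ℕ} (hd : 0 < d) (h : c (x + d) = c x) :
    returnTime c x ≤ d :=
  Nat.find_min' _ ⟨hd, h⟩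

theorem add_nextMate_comp_add (c : ZMod N → Λ) (x y : ZMod N) :
    x + nextMate (fun z ↦ c (x + z)) y = nextMate c (x + y) := by
  simp [nextMate, returnTime, add_assoc]

theorem returnTime_le_of_nextMate_eq {c : ZMod N → Λ} {x y : ZMod N}
    (h : nextMate c x = nextMate c y) : returnTime c y ≤ returnTime c x := by
  by_contra! hlt
  have hx : y + ((returnTime c y - returnTime c x : ℕ) : ZMod N) = x := by
    rw [Nat.cast_sub hlt.le, add_sub_assoc', sub_eq_iff_eq_add]
    exact h.symm
  have hc : c x = c y := by rw [← apply_nextMate c x, h, apply_nextMate c]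
  have := returnTime_le (Nat.sub_pos_of_lt hlt) (hx ▸ hc)
  have := returnTime_pos c x
  omega

theorem nextMate_injective (c : ZMod N → Λ) : (nextMate c).Injective := fun x y h ↦ by
  have hd : returnTime c x = returnTime c y :=
    (returnTime_le_of_nextMate_eq h.symm).antisymm (returnTime_le_of_nextMate_eq h)
  rw [nextMate, nextMate, hd] at h
  exact add_right_cancel h

theorem eq_of_nextMate_eq_self {c : ZMod N → Λ} {x y : ZMod N} (hx : nextMate c x = x)
    (hy : c y = c x) : y = x := by
  by_contra hne
  have hpos : 0 < (y - x).val := Nat.pos_of_ne_zero fun h ↦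
    hne (sub_eq_zero.1 ((ZMod.val_eq_zero _).1 h))
  have hle : returnTime c x ≤ (y - x).val := returnTime_le hpos (by simpa using hy)
  have hdvd : N ∣ returnTime c x := (ZMod.natCast_eq_zero_iff _ _).1 (add_eq_left.1 hx)
  exact ((Nat.le_of_dvd (returnTime_pos c x) hdvd).trans hle).not_gt (ZMod.val_lt _)

/-- The number of elements with the colour of `x`. -/
def fiberCard (c : ZMod N → Λ) (x : ZMod N) : ℕ := #{y | c y = c x}

theorem fiberCard_pos (c : ZMod N → Λ) (x : ZMod N) : 0 < fiberCard c x :=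
  card_pos.2 ⟨x, by simp⟩

theorem fiberCard_le (c : ZMod N → Λ) (x : ZMod N) : fiberCard c x ≤ N :=
  (card_le_univ _).trans_eq (ZMod.card N)

theorem fiberCard_nextMate (c : ZMod N → Λ) (x : ZMod N) :
    fiberCard c (nextMate c x) = fiberCard c x := by
  rw [fiberCard, apply_nextMate c, fiberCard]

theorem fiberCard_le_fiberCard {Λ' : Type*} {c : ZMod N → Λ} {c' : ZMod N → Λ'} {x : ZMod N}
    (h : ∀ y, c' y = c' x → c y = c x) : fiberCard c' x ≤ fiberCard c x :=
  card_le_card <| monotone_filter_right _ fun y _ ↦ h y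

/-- If `val` separates `x` from its mate, then refining `c` by `val` at least halves the class of
`x` or that of its mate. -/
theorem card_split_nextMate_le {Λ' : Type*} {c : ZMod N → Λ} {c' : ZMod N → Λ'}
    {val : ZMod N → Prop} (hc : ∀ x y, c' x = c' y ↔ c x = c y ∧ (val x ↔ val y)) :
    #{x | ¬ (val x ↔ val (nextMate c x))} ≤ 2 * #{x | 2 * fiberCard c' x ≤ fiberCard c x} := by
  let halved : Finset (ZMod N) := {x | 2 * fiberCard c' x ≤ fiberCard c x}
  have hsum {x : ZMod N} (hx : ¬ (val x ↔ val (nextMate c x))) :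
      fiberCard c' x + fiberCard c' (nextMate c x) ≤ fiberCard c x := by
    simp only [fiberCard, hc, apply_nextMate c]
    rw [← card_union_of_disjoint (disjoint_filter.2 fun y _ ↦ by tauto)]
    exact card_le_card fun y ↦ by simp only [mem_union, mem_filter, mem_univ, true_and]; tauto
  have hsub : ({x | ¬ (val x ↔ val (nextMate c x))} : Finset (ZMod N)) ⊆
      halved ∪ ({x | nextMate c x ∈ halved} : Finset (ZMod N)) := fun x hx ↦ by
    have := hsum (mem_filter.1 hx).2
    simp only [halved, mem_union, mem_filter, mem_univ, true_and, fiberCard_nextMate]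
    omega
  have hmate : #{x | nextMate c x ∈ halved} ≤ #halved :=
    card_le_card_of_injOn _ (fun x hx ↦ (mem_filter.1 hx).2) (nextMate_injective c).injOn
  calc _ ≤ #halved + #{x | nextMate c x ∈ halved} :=
        (card_le_card hsub).trans (card_union_le _ _)
    _ ≤ 2 * #halved := by omega

theorem card_halving_le_log {u : ℕ → ℕ} (hpos : ∀ i, 0 < u i) (hu : Antitone u) (m : ℕ) :
    #{i ∈ range m | 2 * u (i + 1) ≤ u i} ≤ Nat.log 2 (u 0) := by
  suffices h : #{i ∈ range m | 2 * u (i + 1) ≤ u i} + Nat.log 2 (u m) ≤ Nat.log 2 (u 0) by omega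
  induction m with
  | zero => simp
  | succ m ih =>
    rw [range_add_one, filter_insert]
    split_ifs with h
    · rw [card_insert_of_notMem (by simp)]
      have : Nat.log 2 (u (m + 1)) + 1 ≤ Nat.log 2 (u m) := by
        rw [← Nat.log_mul_base one_lt_two (hpos _).ne']
        exact Nat.log_mono_right (by omega)
      omega
    · have := Nat.log_mono_right (b := 2) (hu (Nat.le_add_right m 1))
      omega

/-- The values at `x` of those among the predicates `val l` with `l < i`. -/
def prefixTrace {L : ℕ} {V : Type*} (val : Fin L → V → Prop) (i : ℕ) (x : V) (l : Fin L) : Prop :=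
  (l : ℕ) < i ∧ val l x

theorem prefixTrace_eq_iff {L : ℕ} {V : Type*} {val : Fin L → V → Prop} {i : ℕ} {x y : V} :
    prefixTrace val i x = prefixTrace val i y ↔ ∀ l : Fin L, l < i → (val l x ↔ val l y) := by
  simp [funext_iff, prefixTrace]

theorem prefixTrace_succ_eq_iff {L : ℕ} {V : Type*} {val : Fin L → V → Prop} {i : Fin L}
    {x y : V} : prefixTrace val (i + 1) x = prefixTrace val (i + 1) y ↔
      prefixTrace val i x = prefixTrace val i y ∧ (val i x ↔ val i y) := by
  simp only [prefixTrace_eq_iff]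
  refine ⟨fun h ↦ ⟨fun l hl ↦ h l (by omega), h i (by omega)⟩, fun h l hl ↦ ?_⟩
  rcases Nat.lt_succ_iff_lt_or_eq.1 hl with hl | hl
  · exact h.1 l hl
  · exact Fin.ext hl ▸ h.2

theorem sum_card_split_prefixTrace_le {L : ℕ} (val : Fin L → ZMod N → Prop) :
    ∑ i : Fin L, #{x | ¬ (val i x ↔ val i (nextMate (prefixTrace val i) x))} ≤
      2 * (N * Nat.log 2 N) := by
  let size (x : ZMod N) (i : ℕ) : ℕ := fiberCard (prefixTrace val i) x
  have hsize (x : ZMod N) : Antitone (size x) := fun i j hij ↦ fiberCard_le_fiberCard fun y hy ↦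
    prefixTrace_eq_iff.2 fun l hl ↦ prefixTrace_eq_iff.1 hy l (hl.trans_le hij)
  calc _ ≤ ∑ i : Fin L, 2 * #{x | 2 * size x (i + 1) ≤ size x i} :=
        sum_le_sum fun i _ ↦ card_split_nextMate_le fun x y ↦ prefixTrace_succ_eq_iff
    _ = 2 * ∑ x, #{i ∈ range L | 2 * size x (i + 1) ≤ size x i} := by
        rw [← mul_sum, Fin.sum_univ_eq_sum_range fun i ↦ #{x | 2 * size x (i + 1) ≤ size x i}]
        simp_rw [card_filter]
        rw [sum_comm]
    _ ≤ 2 * ∑ _x : ZMod N, Nat.log 2 N := by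
        gcongr with x
        exact (card_halving_le_log (fun _ ↦ fiberCard_pos _ _) (hsize x) L).trans
          (Nat.log_mono_right (fiberCard_le _ _))
    _ = 2 * (N * Nat.log 2 N) := by simp [ZMod.card]

end Mate

/-! ### Graphs represented by a relation -/

section Representable

variable {V V' X : Type*} {R : X → X → Prop} {G : SimpleGraph V} {H : SimpleGraph V'}

/-- `G` is represented by the relation `R` on `X`: its vertices can be assigned elements of `X`,
not necessarily distinct, in such a way that `R` computes adjacency of distinct vertices. -/
def Representable (R : X → X → Prop) (G : SimpleGraph V) : Prop :=
  ∃ p : V → X, Pairwise fun u v ↦ (G.Adj u v ↔ R (p u) (p v))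

theorem Representable.of_embedding (hG : Representable R G) (f : H ↪g G) : Representable R H := by
  obtain ⟨p, hp⟩ := hG
  exact ⟨p ∘ f, fun u v huv ↦ f.map_adj_iff.symm.trans (hp (f.injective.ne huv))⟩

theorem Representable.induce_mono {S T : Set V} (hT : Representable R (G.induce T)) (hST : S ⊆ T) :
    Representable R (G.induce S) :=
  hT.of_embedding (SimpleGraph.induceHomOfLE G hST)

theorem Representable.ncard_trace_le {D L : ℕ} (hR : PolynomialGrowth R D) {a : Fin L → V}
    {A : Set V} (hA : Representable R (G.induce (Set.range a ∪ A))) :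
    ((fun v l ↦ G.Adj v (a l)) '' A).ncard ≤ L + (L + 1) ^ D := by
  obtain ⟨p, hp⟩ := hA
  let y (l : Fin L) : X := p ⟨a l, Or.inl ⟨l, rfl⟩⟩
  have hsub : (fun v l ↦ G.Adj v (a l)) '' A ⊆
      (Set.range fun k l ↦ G.Adj (a k) (a l)) ∪ Set.range fun x l ↦ R x (y l) := by
    rintro _ ⟨v, hv, rfl⟩
    by_cases hva : v ∈ Set.range a
    · obtain ⟨k, rfl⟩ := hva
      exact Or.inl ⟨k, rfl⟩
    · refine Or.inr ⟨p ⟨v, Or.inr hv⟩, funext fun l ↦ propext (hp fun h ↦ hva ⟨l, ?_⟩).symm⟩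
      exact (congrArg Subtype.val h).symm
  calc _ ≤ _ := Set.ncard_le_ncard hsub (Set.toFinite _)
    _ ≤ _ := Set.ncard_union_le _ _
    _ ≤ L + (L + 1) ^ D := by
      refine add_le_add ?_ (hR L y)
      rw [← Nat.card_coe_set_eq]
      exact (Finite.card_range_le _).trans_eq (Nat.card_fin L)

theorem ncard_sym2_le_card_filter [Fintype V] {E : Set (Sym2 V)} {P : V × V → Prop}
    [DecidablePred P] (h : ∀ u v, s(u, v) ∈ E → P (u, v)) : E.ncard ≤ #{e | P e} := by
  have hsub : E ⊆ (fun e : V × V ↦ s(e.1, e.2)) '' ({e | P e} : Finset (V × V)) := fun e ↦ by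
    induction e with | _ u v => exact fun he ↦ ⟨(u, v), by simpa using h u v he, rfl⟩
  calc _ ≤ _ := Set.ncard_le_ncard hsub (Set.toFinite _)
    _ ≤ _ := Set.ncard_image_le (Set.toFinite _)
    _ = _ := Set.ncard_coe_finset _

/-- Composing a representation of `G` on `S` with `φ` represents a graph on the whole vertex set,
which `ε`-farness forces to disagree with `G` often. -/
theorem Far.le_card_not_preserved {n : ℕ} {G : SimpleGraph (Fin n)} {ε : ℝ}
    (hG : Far (fun _ ↦ {H | Representable R H}) G ε) {S : Set (Fin n)}
    (hS : Representable R (G.induce S)) {φ : Fin n → Fin n} (hφ : ∀ v, φ v ∈ S) :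
    ε * n ^ 2 ≤ #{e : Fin n × Fin n | e.1 ≠ e.2 ∧
      ¬ (φ e.1 ≠ φ e.2 ∧ (G.Adj e.1 e.2 ↔ G.Adj (φ e.1) (φ e.2)))} := by
  obtain ⟨p, hp⟩ := hS
  let q (v : Fin n) : X := p ⟨φ v, hφ v⟩
  have hq {u v : Fin n} (huv : φ u ≠ φ v) : G.Adj (φ u) (φ v) ↔ R (q u) (q v) :=
    hp (i := ⟨φ u, hφ u⟩) (j := ⟨φ v, hφ v⟩) fun h ↦ huv (congrArg Subtype.val h)
  let H : SimpleGraph (Fin n) :=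
    { Adj u v := u ≠ v ∧ R (q u) (q v)
      symm := ⟨fun u v ⟨huv, hR⟩ ↦ ⟨huv.symm, by
        by_cases hφuv : φ u = φ v
        · simpa only [q, hφuv] using hR
        · exact (hq (Ne.symm hφuv)).1 ((hq hφuv).2 hR).symm⟩⟩
      loopless := ⟨fun u hu ↦ hu.1 rfl⟩ }
  have hH : Representable R H := ⟨q, fun u v huv ↦ and_iff_right huv⟩
  refine (hG H hH).trans (Nat.cast_le.2 (ncard_sym2_le_card_filter fun u v huv ↦ ?_))
  simp only [Set.mem_ofPred_eq, SimpleGraph.mem_edgeSet] at huv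
  have huv_ne : u ≠ v := by
    rintro rfl
    simp at huv
  refine ⟨huv_ne, fun ⟨hne, hiff⟩ ↦ ?_⟩
  have : G.Adj u v ↔ H.Adj u v := hiff.trans ((hq hne).trans (and_iff_right huv_ne).symm)
  tauto

end Representable

/-! ### Samples of anchors and blocks -/

/-- A sample of vertices, consisting of the anchors `ω (inl l)` and, for each `b : β`, of a
cyclically ordered block of `N` vertices `ω (inr (b, z))`. -/
abbrev Sample (V : Type*) (L N : ℕ) (β : Type*) : Type _ := Fin L ⊕ β × ZMod N → V

namespace Sample

variable {V X β : Type*} {L N : ℕ} {G : SimpleGraph V} {i : ℕ} {b b' : β}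

/-- The `l`-th anchor. -/
def anchor (ω : Sample V L N β) (l : Fin L) : V := ω (.inl l)

/-- The vertex at place `z` of the block `b`. -/
def block (ω : Sample V L N β) (b : β) (z : ZMod N) : V := ω (.inr (b, z))

/-- The vertex at place `0` of the block `b`. -/
def head (ω : Sample V L N β) (b : β) : V := ω.block b 0

/-- The vertices of the sample other than the heads of the blocks. -/
def body (ω : Sample V L N β) : Set V := Set.range ω.anchor ∪ {v | ∃ b, ∃ z ≠ 0, ω.block b z = v}

/-- The adjacencies of the vertices of a block to the anchors before the `i`-th one. -/
def trace (G : SimpleGraph V) (i : ℕ) (b : β) (ω : Sample V L N β) : ZMod N → Fin L → Prop :=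
  prefixTrace (fun l z ↦ G.Adj (ω.block b z) (ω.anchor l)) i

/-- The sample in which the block `b` is rotated by `r b` places. -/
def rotate (r : β → ZMod N) (ω : Sample V L N β) : Sample V L N β :=
  Sum.elim ω.anchor fun x ↦ ω.block x.1 (r x.1 + x.2)

@[simp] theorem anchor_rotate (r : β → ZMod N) (ω : Sample V L N β) :
    (rotate r ω).anchor = ω.anchor :=
  rfl

@[simp] theorem block_rotate (r : β → ZMod N) (ω : Sample V L N β) (b : β) (z : ZMod N) :
    (rotate r ω).block b z = ω.block b (r b + z) :=
  rfl

@[simp] theorem head_rotate (r : β → ZMod N) (ω : Sample V L N β) (b : β) :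
    (rotate r ω).head b = ω.block b (r b) := by
  simp [head]

theorem rotate_injective (r : β → ZMod N) :
    (rotate r : Sample V L N β → Sample V L N β).Injective :=
  Function.LeftInverse.injective (g := rotate (-r)) fun ω ↦ by
    ext (l | ⟨b, z⟩)
    · rfl
    · simp [rotate, block]

theorem range_anchor_union_subset_body_rotate (ω : Sample V L N β) (b : β) (x : ZMod N) :
    Set.range ω.anchor ∪ ω.block b '' {x}ᶜ ⊆ (rotate (fun _ ↦ x) ω).body := by
  refine Set.union_subset_union subset_rfl ?_
  rintro _ ⟨z, hz, rfl⟩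
  exact ⟨b, z - x, sub_ne_zero.2 hz, by simp⟩

variable [NeZero N]

/-- The place, in the block `b`, of the next vertex after the head which the first `i` anchors do
not distinguish from the head. It is `0` if there is no such vertex. -/
def mateIndex (G : SimpleGraph V) (i : ℕ) (b : β) (ω : Sample V L N β) : ZMod N :=
  nextMate (trace G i b ω) 0

/-- The vertex at the place `mateIndex`. -/
def mate (G : SimpleGraph V) (i : ℕ) (b : β) (ω : Sample V L N β) : V :=
  ω.block b (mateIndex G i b ω)

theorem mateIndex_congr {ω ω' : Sample V L N β}
    (hanchor : ∀ l : Fin L, l < i → ω.anchor l = ω'.anchor l)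
    (hblock : ω.block b = ω'.block b') : mateIndex G i b ω = mateIndex G i b' ω' := by
  have htrace : trace G i b ω = trace G i b' ω' := by
    funext z l
    exact propext (and_congr_right fun hl ↦ by simp only [hblock, hanchor l hl])
  rw [mateIndex, htrace, mateIndex]

theorem mate_congr {ω ω' : Sample V L N β}
    (hanchor : ∀ l : Fin L, l < i → ω.anchor l = ω'.anchor l)
    (hblock : ω.block b = ω'.block b') : mate G i b ω = mate G i b' ω' := by
  rw [mate, mateIndex_congr hanchor hblock, hblock, mate]

theorem add_nextMate_trace_rotate (r : β → ZMod N) (ω : Sample V L N β) (z : ZMod N) :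
    r b + nextMate (trace G i b (rotate r ω)) z = nextMate (trace G i b ω) (r b + z) :=
  add_nextMate_comp_add (trace G i b ω) (r b) z

theorem add_mateIndex_rotate (r : β → ZMod N) (ω : Sample V L N β) :
    r b + mateIndex G i b (rotate r ω) = nextMate (trace G i b ω) (r b) := by
  rw [mateIndex, add_nextMate_trace_rotate, add_zero]

theorem mate_rotate (r : β → ZMod N) (ω : Sample V L N β) :
    mate G i b (rotate r ω) = ω.block b (nextMate (trace G i b ω) (r b)) :=
  congrArg (ω.block b) (add_mateIndex_rotate r ω)

/-- The anchor `l` is adjacent to exactly one of the head and the mate of the block `b`. -/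
def Splits (G : SimpleGraph V) (l : Fin L) (b : β) (ω : Sample V L N β) : Prop :=
  ¬ (G.Adj (ω.head b) (ω.anchor l) ↔ G.Adj (mate G l b ω) (ω.anchor l))

theorem card_splits_rotate_le (b : β) (ω : Sample V L N β) :
    #{x : Fin L × ZMod N | Splits G x.1 b (rotate (fun _ ↦ x.2) ω)} ≤ 2 * (N * Nat.log 2 N) := by
  let val (l : Fin L) (z : ZMod N) : Prop := G.Adj (ω.block b z) (ω.anchor l)
  have hsplits (x : Fin L × ZMod N) : Splits G x.1 b (rotate (fun _ ↦ x.2) ω) ↔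
      ¬ (val x.1 x.2 ↔ val x.1 (nextMate (prefixTrace val x.1) x.2)) := by
    simp only [Splits, mate_rotate, head_rotate, anchor_rotate]
    rfl
  simp_rw [hsplits, card_filter, Fintype.sum_prod_type, ← card_filter]
  exact sum_card_split_prefixTrace_le val

theorem rotate_mateIndex_injective (G : SimpleGraph V) (i : ℕ) (b : β) :
    (fun ω : Sample V L N β ↦ rotate (Pi.single b (mateIndex G i b ω)) ω).Injective := by
  intro ω ω' h
  have hmate (ω : Sample V L N β) : nextMate
      (trace G i b (rotate (Pi.single b (mateIndex G i b ω)) ω)) (-mateIndex G i b ω) = 0 := by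
    have := add_nextMate_trace_rotate (G := G) (i := i) (b := b)
      (Pi.single b (mateIndex G i b ω)) ω (-mateIndex G i b ω)
    rwa [Pi.single_eq_same, add_neg_cancel, ← mateIndex, add_eq_left] at this
  have hindex : mateIndex G i b ω = mateIndex G i b ω' := by
    refine neg_injective (nextMate_injective _ ((hmate ω).trans ?_))
    rw [show rotate _ ω = rotate _ ω' from h]
    exact (hmate ω').symm
  simp only [hindex] at h
  exact rotate_injective _ h

theorem card_no_mate_rotate_le {R : X → X → Prop} {D : ℕ} (hR : PolynomialGrowth R D)
    (ω : Sample V L N β) :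
    #{x | Representable R (G.induce (rotate (fun _ ↦ x) ω).body) ∧
      mateIndex G i b (rotate (fun _ ↦ x) ω) = 0} ≤ L + (L + 1) ^ D + 1 := by
  set F : Finset (ZMod N) := {x | Representable R (G.induce (rotate (fun _ ↦ x) ω).body) ∧
    mateIndex G i b (rotate (fun _ ↦ x) ω) = 0}
  rcases F.eq_empty_or_nonempty with hF | ⟨x₀, hx₀⟩
  · simp [hF]
  have halone {x : ZMod N} (hx : x ∈ F) : nextMate (trace G i b ω) x = x := by
    rw [← add_mateIndex_rotate (fun _ ↦ x), (mem_filter.1 hx).2.2, add_zero]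
  let adj (v : V) (l : Fin L) : Prop := G.Adj v (ω.anchor l)
  have hinj : Set.InjOn (adj ∘ ω.block b) F := fun x hx y _ hxy ↦
    (eq_of_nextMate_eq_self (halone hx) <| prefixTrace_eq_iff.2 fun l _ ↦
      (congrFun hxy.symm l).to_iff).symm
  have herase : #(F.erase x₀) ≤ L + (L + 1) ^ D := calc
    _ = ((adj ∘ ω.block b) '' (F.erase x₀ : Set (ZMod N))).ncard := by
      rw [(hinj.mono (by simp)).ncard_image, Set.ncard_coe_finset]
    _ ≤ (adj '' (ω.block b '' {x₀}ᶜ)).ncard := by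
      rw [← Set.image_comp]
      refine Set.ncard_le_ncard (Set.image_mono fun x hx ↦ ?_) (Set.toFinite _)
      exact (mem_erase.1 hx).1
    _ ≤ L + (L + 1) ^ D := ((mem_filter.1 hx₀).2.1.induce_mono
      (range_anchor_union_subset_body_rotate ω b x₀)).ncard_trace_le hR
  rw [← card_erase_add_one hx₀]
  omega

variable [Fintype V] [Fintype β]

theorem sum_prob_splits_le (b : β) :
    ∑ l, prob (Splits (L := L) (N := N) G l b) ≤ 2 * Nat.log 2 N := by
  have h := sum_prob_le (p := fun x : Fin L × ZMod N ↦ Splits G x.1 b)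
    (fun x ↦ rotate_injective fun _ ↦ x.2)
    fun ω ↦ card_splits_rotate_le (G := G) (L := L) (N := N) b ω
  rw [Fintype.sum_prod_type] at h
  have hN : (0 : ℝ) < N := Nat.cast_pos.2 (NeZero.pos N)
  refine le_of_mul_le_mul_left ?_ hN
  calc _ = _ := by simp [mul_sum, ZMod.card]
    _ ≤ _ := h
    _ = _ := by push_cast; ring

theorem prob_splits_eq (l : Fin L) (b b' : β) :
    prob (Splits (N := N) G l b) = prob (Splits (N := N) G l b') := by
  let σ : Equiv.Perm (Fin L ⊕ β × ZMod N) :=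
    (Equiv.refl _).sumCongr ((Equiv.swap b b').prodCongr (.refl _))
  rw [← prob_comp σ.surjective.injective_comp_right (Splits G l b)]
  congr 1
  funext (ω : Sample V L N β)
  have hblock : block (ω ∘ σ) b = ω.block b' := by
    funext z
    simp [block, σ]
  simp only [Splits, head, hblock, mate_congr (ω := ω ∘ σ) (ω' := ω) (fun _ _ ↦ rfl) hblock]
  rfl

theorem exists_prob_splits_le [Nonempty β] (hL : 0 < L) (G : SimpleGraph V) :
    ∃ l : Fin L, ∀ b : β, prob (Splits (N := N) G l b) ≤ 2 * Nat.log 2 N / L := by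
  have b₀ : β := Classical.arbitrary β
  have : Nonempty (Fin L) := ⟨0, hL⟩
  obtain ⟨l, -, hl⟩ := exists_le_of_sum_le (s := univ) univ_nonempty
    (f := fun l ↦ prob (Splits (L := L) (N := N) G l b₀))
    (g := fun _ ↦ 2 * Nat.log 2 N / (L : ℝ)) <| by
      have : (L : ℝ) ≠ 0 := Nat.cast_ne_zero.2 hL.ne'
      rw [sum_const, card_univ, Fintype.card_fin, nsmul_eq_mul, mul_div_cancel₀ _ this]
      exact sum_prob_splits_le b₀
  exact ⟨l, fun b ↦ (prob_splits_eq l b b₀).trans_le hl⟩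

theorem prob_head_split_eq (l : Fin L) (hb : b ≠ b') :
    prob (fun ω : Sample V L N β ↦
      ¬ (G.Adj (ω.head b) (ω.head b') ↔ G.Adj (mate G l b ω) (ω.head b'))) =
    prob (Splits (N := N) G l b) := by
  let σ : Equiv.Perm (Fin L ⊕ β × ZMod N) := Equiv.swap (.inl l) (.inr (b', 0))
  rw [← prob_comp σ.surjective.injective_comp_right (Splits G l b)]
  congr 1
  funext (ω : Sample V L N β)
  have hanchor : anchor (ω ∘ σ) l = ω.head b' := by simp [anchor, head, block, σ]
  have hlt (k : Fin L) (hk : k < l) : anchor (ω ∘ σ) k = ω.anchor k := by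
    simp [anchor, σ, Equiv.swap_apply_of_ne_of_ne, hk.ne]
  have hblock : block (ω ∘ σ) b = ω.block b := by
    funext z
    simp [block, σ, Equiv.swap_apply_of_ne_of_ne, hb]
  simp only [Splits, head, hblock, hanchor, mate_congr (ω := ω ∘ σ) (ω' := ω) hlt hblock]

theorem prob_mate_split_eq (l : Fin L) (hb : b ≠ b') :
    prob (fun ω : Sample V L N β ↦
      ¬ (G.Adj (mate G l b ω) (ω.head b') ↔ G.Adj (mate G l b ω) (mate G l b' ω))) =
    prob (Splits (N := N) G l b') := by
  rw [← prob_head_split_eq l hb.symm,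
    ← prob_comp (rotate_mateIndex_injective G l b) fun ω ↦
      ¬ (G.Adj (ω.head b') (ω.head b) ↔ G.Adj (mate G l b' ω) (ω.head b))]
  congr 1
  funext ω
  let ω' : Sample V L N β := rotate (Pi.single b (mateIndex G l b ω)) ω
  have hhead : ω'.head b = mate G l b ω := by simp [ω', mate]
  have hblock : ω'.block b' = ω.block b' := by
    funext z
    simp [ω', Pi.single_eq_of_ne hb.symm]
  have hmate : mate G l b' ω' = mate G l b' ω := mate_congr (fun _ _ ↦ rfl) hblock
  change _ = (¬ (G.Adj (ω'.head b') (ω'.head b) ↔ G.Adj (mate G l b' ω') (ω'.head b)))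
  have hhead' : ω'.head b' = ω.head b' := congrFun hblock 0
  rw [hhead, hhead', hmate, G.adj_comm (ω.head b'), G.adj_comm (mate G l b' ω)]

theorem prob_adj_mate_ne_le (l : Fin L) (hb : b ≠ b') :
    prob (fun ω : Sample V L N β ↦
      ¬ (G.Adj (ω.head b) (ω.head b') ↔ G.Adj (mate G l b ω) (mate G l b' ω))) ≤
    prob (Splits (N := N) G l b) + prob (Splits (N := N) G l b') := by
  rw [← prob_head_split_eq l hb, ← prob_mate_split_eq l hb]
  exact (prob_mono fun ω ↦ by tauto).trans (prob_or_le _ _)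

theorem prob_no_mate_le {R : X → X → Prop} {D : ℕ} (hR : PolynomialGrowth R D) (i : ℕ) (b : β) :
    prob (fun ω : Sample V L N β ↦
      Representable R (G.induce ω.body) ∧ mateIndex G i b ω = 0) ≤
    (L + (L + 1) ^ D + 1 : ℕ) / N := by
  have h := sum_prob_le (p := fun _ : ZMod N ↦ fun ω : Sample V L N β ↦
      Representable R (G.induce ω.body) ∧ mateIndex G i b ω = 0)
    (fun x ↦ rotate_injective fun _ ↦ x)
    fun ω ↦ card_no_mate_rotate_le (G := G) (i := i) (b := b) hR ω
  rw [sum_const, card_univ, ZMod.card, nsmul_eq_mul] at h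
  rwa [le_div_iff₀' (Nat.cast_pos.2 (NeZero.pos N))]

theorem prob_collision_le [Nonempty V] (hb : b ≠ b') :
    prob (fun ω : Sample V L N β ↦ ∃ z z', ω.block b z = ω.block b' z') ≤
      N ^ 2 / Fintype.card V := by
  calc _ = prob (fun ω : Sample V L N β ↦
          ∃ z : ZMod N × ZMod N, ω.block b z.1 = ω.block b' z.2) := by
        simp only [Prod.exists]
    _ ≤ ∑ z : ZMod N × ZMod N, prob (fun ω : Sample V L N β ↦ ω.block b z.1 = ω.block b' z.2) :=
        prob_exists_le _
    _ = ∑ _z : ZMod N × ZMod N, 1 / (Fintype.card V : ℝ) :=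
        sum_congr rfl fun z _ ↦ prob_eval_eq_eval (by simp [hb])
    _ = N ^ 2 / Fintype.card V := by
        rw [sum_const, card_univ, Fintype.card_prod, ZMod.card, nsmul_eq_mul]
        push_cast
        ring

/-! ### Mapping the graph into a sample -/

section Transplant

variable {V X β : Type*} {L N : ℕ} {G : SimpleGraph V} {R : X → X → Prop} {i : ℕ} {b b' : β}

theorem body_subset_range {ω ω' : Sample V L N β} (hanchor : ω'.anchor = ω.anchor)
    (hblock : ∀ b, ∀ z ≠ 0, ω'.block b z = ω.block b z) : ω'.body ⊆ Set.range ω := by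
  rintro _ (⟨l, rfl⟩ | ⟨b, z, hz, rfl⟩)
  · exact hanchor ▸ Set.mem_range_self _
  · exact hblock b z hz ▸ Set.mem_range_self _

variable [NeZero N]

/-- The vertex of the block `b` which becomes the mate of `v` when `v` replaces the head. -/
def transplant (G : SimpleGraph V) (i : ℕ) (ω : Sample V L N β) (b : β) (v : V) : V :=
  ω.block b (mateIndex G i b (Function.update ω (.inr (b, 0)) v))

/-- The event that the adjacency of the heads of the blocks `b` and `b'` cannot be read off their
mates. -/
def Bad (R : X → X → Prop) (G : SimpleGraph V) (i : ℕ) (b b' : β) (ω : Sample V L N β) : Prop :=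
  (∃ z z', ω.block b z = ω.block b' z') ∨
  (Representable R (G.induce ω.body) ∧ mateIndex G i b ω = 0) ∨
  (Representable R (G.induce ω.body) ∧ mateIndex G i b' ω = 0) ∨
  ¬ (G.Adj (ω.head b) (ω.head b') ↔ G.Adj (mate G i b ω) (mate G i b' ω))

theorem transplant_eq_mate {ω ω' : Sample V L N β} {v : V} (hanchor : ω'.anchor = ω.anchor)
    (hblock : ω'.block b = Function.update (ω.block b) 0 v) (hne : mateIndex G i b ω' ≠ 0) :
    transplant G i ω b v = mate G i b ω' := by
  have hindex : mateIndex G i b (Function.update ω (.inr (b, 0)) v) = mateIndex G i b ω' := by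
    refine mateIndex_congr (fun l _ ↦ ?_) (funext fun z ↦ ?_)
    · rw [hanchor]
      simp [anchor]
    · rw [hblock]
      simp [block, Function.update_apply]
  rw [transplant, hindex, mate, hblock, Function.update_of_ne hne]

theorem bad_of_not_preserved {ω : Sample V L N β} (hω : Representable R (G.induce (Set.range ω)))
    {u v : V} (h : ¬ (transplant G i ω b u ≠ transplant G i ω b' v ∧
      (G.Adj u v ↔ G.Adj (transplant G i ω b u) (transplant G i ω b' v)))) :
    Bad R G i b b' (Function.update (Function.update ω (.inr (b, 0)) u) (.inr (b', 0)) v) := by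
  rcases eq_or_ne b b' with rfl | hb
  · exact Or.inl ⟨0, 0, rfl⟩
  set ω' : Sample V L N β :=
    Function.update (Function.update ω (.inr (b, 0)) u) (.inr (b', 0)) v with hω'
  have hanchor : ω'.anchor = ω.anchor := funext fun l ↦ by simp [hω', anchor]
  have hblock : ω'.block b = Function.update (ω.block b) 0 u := funext fun z ↦ by
    simp [hω', block, Function.update_apply, hb]
  have hblock' : ω'.block b' = Function.update (ω.block b') 0 v := funext fun z ↦ by
    simp [hω', block, Function.update_apply, hb.symm]
  have hbody : Representable R (G.induce ω'.body) :=
    hω.induce_mono (body_subset_range hanchor fun b z hz ↦ by simp [hω', block, hz])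
  by_contra hbad
  simp only [Bad, hbody, true_and, not_or, not_not] at hbad
  obtain ⟨hdisj, hmate, hmate', hadj⟩ := hbad
  rw [transplant_eq_mate hanchor hblock hmate, transplant_eq_mate hanchor hblock' hmate'] at h
  simp only [head, hblock, hblock', Function.update_self] at hadj
  exact h ⟨fun heq ↦ hdisj ⟨_, _, heq⟩, hadj⟩

theorem prob_bad_le [Fintype V] [Nonempty V] [Fintype β] {D : ℕ} (hR : PolynomialGrowth R D)
    (l : Fin L) (hb : b ≠ b') :
    prob (Bad (L := L) (N := N) R G l b b') ≤ N ^ 2 / Fintype.card V +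
      2 * ((L + (L + 1) ^ D + 1 : ℕ) / N) +
      (prob (Splits (N := N) G l b) + prob (Splits (N := N) G l b')) := by
  have hcollision := prob_collision_le (V := V) (β := β) (L := L) (N := N) hb
  have halone := prob_no_mate_le (β := β) (L := L) (N := N) (G := G) hR l
  have hadj := prob_adj_mate_ne_le (N := N) (G := G) l hb
  have hor := prob_or_le (Ω := Sample V L N β)
  calc prob (Bad R G l b b') ≤ _ := (hor _ _).trans <| add_le_add hcollision <|
        (hor _ _).trans <| add_le_add (halone b) <| (hor _ _).trans <| add_le_add (halone b') hadj
    _ = _ := by ring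

end Transplant

end Sample

theorem expect_coloring_le {V β : Type*} [Fintype V] [DecidableEq V] [Fintype β] [Nonempty β]
    {F : β → β → V × V → ℝ} (hF : ∀ b b' e, 0 ≤ F b b' e) :
    𝔼 γ : V → β, 𝔼 e : V × V, (if e.1 = e.2 then 0 else F (γ e.1) (γ e.2) e) ≤
      𝔼 b, 𝔼 b', 𝔼 e, F b b' e := by
  calc _ = 𝔼 e : V × V, 𝔼 γ : V → β, if e.1 = e.2 then 0 else F (γ e.1) (γ e.2) e :=
        expect_comm _ _ _
    _ ≤ 𝔼 e : V × V, 𝔼 b, 𝔼 b', F b b' e := expect_le_expect fun e _ ↦ by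
        split_ifs with he
        · rw [expect_const_zero]
          exact expect_nonneg fun b _ ↦ expect_nonneg fun b' _ ↦ hF b b' e
        · exact (expect_eval_pair he fun b b' ↦ F b b' e).le
    _ = _ := by
        rw [expect_comm]
        exact expect_congr rfl fun b _ ↦ expect_comm _ _ _

theorem expect_update_update {ι W : Type*} [Fintype ι] [Fintype W] [DecidableEq ι] (i j : ι)
    (F : (ι → W) → ℝ) :
    𝔼 ω : ι → W, 𝔼 x : W × W, F (Function.update (Function.update ω i x.1) j x.2) =
      𝔼 ω, F ω := by
  simp_rw [← univ_product_univ, expect_product]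
  rw [expect_update i fun ω ↦ 𝔼 y, F (Function.update ω j y), expect_update]

section Averaging

variable {X β : Type*} {R : X → X → Prop} {L N : ℕ} [NeZero N] {n : ℕ}
  {G : SimpleGraph (Fin n)} {ε : ℝ} {i : ℕ}

open Sample

/-- The indicator of `Bad` for the sample `ω` after making `e.1` and `e.2` the heads of the blocks
`b` and `b'`. -/
def defect (R : X → X → Prop) (G : SimpleGraph (Fin n)) (i : ℕ) (ω : Sample (Fin n) L N β)
    (b b' : β) (e : Fin n × Fin n) : ℝ :=
  if Bad R G i b b'
    (Function.update (Function.update ω (.inr (b, 0)) e.1) (.inr (b', 0)) e.2) then 1 else 0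

theorem defect_nonneg (ω : Sample (Fin n) L N β) (b b' : β) (e : Fin n × Fin n) :
    0 ≤ defect R G i ω b b' e := by
  unfold defect
  split_ifs <;> simp

theorem Far.le_expect_defect [NeZero n] (hG : Far (fun _ ↦ {H | Representable R H}) G ε)
    {ω : Sample (Fin n) L N β} (hω : Representable R (G.induce (Set.range ω))) (γ : Fin n → β) :
    ε ≤ 𝔼 e : Fin n × Fin n, if e.1 = e.2 then 0 else defect R G i ω (γ e.1) (γ e.2) e := by
  have hn : (0 : ℝ) < n ^ 2 := by have := NeZero.pos n; positivity
  have hfar := hG.le_card_not_preserved hω (φ := fun v ↦ transplant G i ω (γ v) v)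
    fun v ↦ Set.mem_range_self _
  rw [Fintype.expect_eq_sum_div_card, Fintype.card_prod, Fintype.card_fin, Nat.cast_mul, ← sq,
    le_div_iff₀ hn]
  refine hfar.trans ?_
  rw [card_filter, Nat.cast_sum]
  refine sum_le_sum fun e _ ↦ ?_
  by_cases he : e.1 = e.2
  · simp [he]
  · rw [if_neg he, defect]
    split_ifs with h hbad
    · simp
    · exact absurd (bad_of_not_preserved hω h.2) hbad
    all_goals simp

variable [Fintype β]

theorem expect_defect_eq (b b' : β) :
    𝔼 ω : Sample (Fin n) L N β, 𝔼 e, defect R G i ω b b' e =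
      prob (Bad (L := L) (N := N) R G i b b') :=
  expect_update_update _ _ fun ω ↦ if Bad R G i b b' ω then (1 : ℝ) else 0

theorem Far.mul_prob_representable_le [NeZero n] [Nonempty β]
    (hG : Far (fun _ ↦ {H | Representable R H}) G ε) {η : ℝ} (hη₀ : 0 ≤ η)
    (hη : ∀ b b' : β, b ≠ b' → prob (Bad (L := L) (N := N) R G i b b') ≤ η) :
    ε * prob (fun ω : Sample (Fin n) L N β ↦ Representable R (G.induce (Set.range ω))) ≤
      1 / Fintype.card β + η := by
  calc _ ≤ 𝔼 ω : Sample (Fin n) L N β, 𝔼 b, 𝔼 b', 𝔼 e, defect R G i ω b b' e := by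
        rw [prob, mul_expect]
        refine expect_le_expect fun ω _ ↦ ?_
        split_ifs with hω
        · rw [mul_one]
          refine le_trans ?_ (expect_coloring_le (defect_nonneg ω))
          exact le_expect univ_nonempty fun γ _ ↦ hG.le_expect_defect hω γ
        · rw [mul_zero]
          exact expect_nonneg fun b _ ↦ expect_nonneg fun b' _ ↦ expect_nonneg fun e _ ↦
            defect_nonneg ω b b' e
    _ = 𝔼 b : β, 𝔼 b', prob (Bad (L := L) (N := N) R G i b b') := by
        rw [expect_comm]
        refine expect_congr rfl fun b _ ↦ ?_
        rw [expect_comm]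
        exact expect_congr rfl fun b' _ ↦ expect_defect_eq b b'
    _ ≤ 𝔼 b : β, 𝔼 b', ((if b = b' then 1 else 0) + η) := by
        refine expect_le_expect fun b _ ↦ expect_le_expect fun b' _ ↦ ?_
        split_ifs with hb
        · exact (prob_le_one _).trans (le_add_of_nonneg_right hη₀)
        · exact (hη b b' hb).trans_eq (zero_add η).symm
    _ = 1 / Fintype.card β + η := by simp [expect_add_distrib]

end Averaging

/-! ### Random subsets and random samples -/

section Sampling

variable {V ι : Type*} [Fintype V] [Fintype ι] {A : Set V → Prop} {q : ℕ}

theorem card_filter_powersetCard_mul_descFactorial_le (hA : Antitone A) (hιq : Fintype.card ι ≤ q) :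
    #((powersetCard q univ).filter fun Q : Finset V ↦ A Q) * q.descFactorial (Fintype.card ι) ≤
      #{e : ι ↪ V | A (Set.range e)} *
        (Fintype.card V - Fintype.card ι).choose (q - Fintype.card ι) := by
  refine card_mul_le_card_mul (fun (Q : Finset V) (e : ι ↪ V) ↦ Set.range e ⊆ Q)
    (fun Q hQ ↦ ?_) fun e _ ↦ ?_
  · obtain ⟨hcard, hAQ⟩ := mem_filter.1 hQ
    calc q.descFactorial (Fintype.card ι) = #(univ : Finset (ι ↪ Q)) := by
          simp [Fintype.card_embedding_eq, (mem_powersetCard.1 hcard).2]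
      _ ≤ _ := by
          refine card_le_card_of_injOn (fun e ↦ e.trans (.subtype _)) (fun e _ ↦ ?_)
            fun e _ e' _ h ↦ ?_
          · have hrange : Set.range (e.trans (.subtype (· ∈ Q))) ⊆ (Q : Set V) := by
              rintro _ ⟨x, rfl⟩
              exact (e x).2
            simpa [bipartiteAbove] using ⟨hA hrange hAQ, hrange⟩
          · ext x : 1
            exact Subtype.ext (DFunLike.congr_fun h x)
  · have hcard : #(univ.map e) = Fintype.card ι := by simp
    rw [← hcard, ← card_univ (α := V), ← card_filter_powersetCard_subset _ _ _ (subset_univ _)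
      (hcard.trans_le hιq)]
    refine card_le_card fun Q hQ ↦ ?_
    obtain ⟨hQ, hsub⟩ := mem_filter.1 hQ
    refine mem_filter.2 ⟨(mem_filter.1 hQ).1, ?_⟩
    simpa [← coe_subset] using hsub

theorem three_mul_pow_le_four_mul_descFactorial {n k : ℕ} (h : 4 * k ^ 2 ≤ n) :
    3 * n ^ k ≤ 4 * n.descFactorial k := by
  rcases n.eq_zero_or_pos with rfl | hn
  · obtain rfl : k = 0 := by simpa using h
    norm_num
  have hkn : k ≤ n := by nlinarith
  have hn' : (0 : ℝ) < n := Nat.cast_pos.2 hn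
  have hsmall : (k : ℝ) * (k / n) ≤ 1 / 4 := by
    rw [← mul_div_assoc, div_le_div_iff₀ hn' (by norm_num)]
    exact_mod_cast (by linarith : k * k * 4 ≤ 1 * n)
  have hbernoulli : (3 / 4 : ℝ) ≤ (1 - k / n) ^ k := by
    have hle : (k : ℝ) / n ≤ 1 := div_le_one_of_le₀ (Nat.cast_le.2 hkn) hn'.le
    have := one_add_mul_le_pow (a := -(k / n : ℝ)) (by linarith) k
    rw [sub_eq_add_neg]
    linarith
  have hpow : 3 * (n : ℝ) ^ k ≤ 4 * ((n - k : ℕ) : ℝ) ^ k := by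
    have heq : ((n - k : ℕ) : ℝ) = (1 - k / n) * n := by
      rw [Nat.cast_sub hkn]
      field_simp
    rw [heq, mul_pow]
    nlinarith [pow_pos hn' k]
  calc 3 * n ^ k ≤ 4 * (n - k) ^ k := by exact_mod_cast hpow
    _ ≤ 4 * (n + 1 - k) ^ k := by gcongr; omega
    _ ≤ _ := Nat.mul_le_mul_left 4 (Nat.pow_sub_le_descFactorial n k)

theorem le_prob_range [DecidableEq ι] (hA : Antitone A) (hιq : Fintype.card ι ≤ q)
    (hqV : q ≤ Fintype.card V)
    (hι : 4 * Fintype.card ι ^ 2 ≤ Fintype.card V)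
    (hcard : (Fintype.card V).choose q ≤
      3 * #((powersetCard q univ).filter fun Q : Finset V ↦ A Q)) :
    1 / 4 ≤ prob fun ω : ι → V ↦ A (Set.range ω) := by
  set k := Fintype.card ι
  set n := Fintype.card V
  have hchoose : n.choose q * q.descFactorial k =
      n.descFactorial k * (n - k).choose (q - k) := by
    rw [Nat.descFactorial_eq_factorial_mul_choose, Nat.descFactorial_eq_factorial_mul_choose,
      mul_left_comm, Nat.choose_mul hιq, mul_assoc]
  have hembedding : n.descFactorial k ≤ 3 * #{e : ι ↪ V | A (Set.range e)} := by
    refine Nat.le_of_mul_le_mul_right ?_ (Nat.choose_pos (by omega : q - k ≤ n - k))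
    have := card_filter_powersetCard_mul_descFactorial_le hA hιq
    rw [← hchoose]
    nlinarith
  have hfun : #{e : ι ↪ V | A (Set.range e)} ≤ #{ω : ι → V | A (Set.range ω)} :=
    card_le_card_of_injOn (fun e ↦ e) (fun e he ↦ by simpa using he)
      DFunLike.coe_injective.injOn
  have hpow : n ^ k ≤ 4 * #{ω : ι → V | A (Set.range ω)} := by
    have := three_mul_pow_le_four_mul_descFactorial hι
    omega
  have hpos : 0 < n ^ k := by
    rcases n.eq_zero_or_pos with hn | hn
    · obtain hk : k = 0 := by simpa [hn] using hι
      simp [hk]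
    · positivity
  rw [prob, Fintype.expect_eq_sum_div_card, sum_boole, Fintype.card_fun,
    div_le_div_iff₀ (by norm_num) (Nat.cast_pos.2 hpos)]
  exact_mod_cast (by linarith : 1 * n ^ k ≤ #{ω : ι → V | A (Set.range ω)} * 4)

end Sampling

theorem representable_induce_of_inducedOn {X : Type*} {R : X → X → Prop} {n m : ℕ}
    {G : SimpleGraph (Fin n)} {Q : Finset (Fin n)} (hQ : #Q = m)
    (h : Representable R (inducedOn G Q hQ)) : Representable R (G.induce (Q : Set (Fin n))) :=
  h.of_embedding ⟨(Q.orderIsoOfFin hQ).symm.toEquiv.toEmbedding, by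
    simp [inducedOn, -coe_orderIsoOfFin_apply]⟩

/-! ### Easy testability -/

/-- At least two thirds of the `q`-element vertex subsets of `G` induce a graph violating `P`. -/
def Detects (P : ∀ n : ℕ, Set (SimpleGraph (Fin n))) {n : ℕ} (G : SimpleGraph (Fin n))
    (q : ℕ) : Prop :=
  (2 / 3 : ℝ) * #(powersetCard q (univ : Finset (Fin n))) ≤
    #{Q ∈ powersetCard q (univ : Finset (Fin n)) | ∃ h : #Q = q, inducedOn G Q h ∉ P q}

theorem easilyTestable_of_detects {P : ∀ n : ℕ, Set (SimpleGraph (Fin n))} (w : ℕ)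
    (h : ∀ m n q : ℕ, 2 ≤ m → m ^ w ≤ q → q ≤ n →
      ∀ G : SimpleGraph (Fin n), Far P G (1 / m) → Detects P G q) : EasilyTestable P := by
  refine ⟨(2 * (w + 1) : ℕ), by positivity, fun ε hε hε2 n G hn hG ↦ ?_⟩
  have hinv : 2 < 1 / ε := by
    rw [lt_div_iff₀ hε]
    linarith
  have hceil : 1 / ε ≤ ⌈1 / ε⌉₊ := Nat.le_ceil _
  have hm : 2 ≤ ⌈1 / ε⌉₊ := by exact_mod_cast hinv.le.trans hceil
  have hpow : ε ^ (-((2 * (w + 1) : ℕ) : ℝ)) = ((1 / ε) ^ 2) ^ (w + 1) := by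
    rw [Real.rpow_neg hε.le, Real.rpow_natCast, ← pow_mul, one_div, inv_pow]
  refine h ⌈1 / ε⌉₊ n _ hm ?_ (Nat.ceil_le.2 hn) G fun H hH ↦ (hG H hH).trans' ?_
  · refine Nat.cast_le (α := ℝ).1 ((Nat.le_ceil _).trans' ?_)
    have hsq : (⌈1 / ε⌉₊ : ℝ) ≤ (1 / ε) ^ 2 := by
      have := Nat.ceil_lt_add_one (by linarith : 0 ≤ 1 / ε)
      nlinarith
    rw [hpow, Nat.cast_pow]
    exact (pow_le_pow_left₀ (by positivity) hsq w).trans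
      (pow_le_pow_right₀ (by nlinarith) w.le_succ)
  · gcongr
    exact (one_div_le (by linarith) hε).2 hceil

section Testing

variable {X : Type*} {R : X → X → Prop} {D : ℕ}

theorem choose_le_of_not_detects {n q : ℕ} {G : SimpleGraph (Fin n)}
    (h : ¬ Detects (fun _ ↦ {H | Representable R H}) G q) :
    n.choose q ≤ 3 * #((powersetCard q univ).filter fun Q : Finset (Fin n) ↦
      Representable R (G.induce (Q : Set (Fin n)))) := by
  have hsub : (powersetCard q univ).filter (fun Q : Finset (Fin n) ↦
        ¬ ∃ h : #Q = q, inducedOn G Q h ∉ {H | Representable R H}) ⊆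
      (powersetCard q univ).filter fun Q : Finset (Fin n) ↦
        Representable R (G.induce (Q : Set (Fin n))) := fun Q hQ ↦ by
    obtain ⟨hQ, hind⟩ := mem_filter.1 hQ
    refine mem_filter.2 ⟨hQ, ?_⟩
    by_contra hrep
    exact hind ⟨(mem_powersetCard.1 hQ).2, mt (representable_induce_of_inducedOn _) hrep⟩
  have hsplit := card_filter_add_card_filter_not (s := powersetCard q (univ : Finset (Fin n)))
    fun Q ↦ ∃ h : #Q = q, inducedOn G Q h ∉ {H | Representable R H}
  have hcard := card_le_card hsub
  rw [Detects, not_le, card_powersetCard, card_univ, Fintype.card_fin] at h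
  rw [card_powersetCard, card_univ, Fintype.card_fin] at hsplit
  have hviolating : 3 * #((powersetCard q univ).filter fun Q : Finset (Fin n) ↦
      ∃ h : #Q = q, inducedOn G Q h ∉ {H | Representable R H}) < 2 * n.choose q :=
    Nat.cast_lt (α := ℝ).1 (by push_cast; linarith)
  omega

theorem Far.le_of_not_detects (hR : PolynomialGrowth R D) {β : Type*} [Fintype β] [Nonempty β]
    {n q L N : ℕ} [NeZero L] [NeZero N] {G : SimpleGraph (Fin n)} {ε : ℝ} (hε : 0 ≤ ε)
    (hG : Far (fun _ ↦ {H | Representable R H}) G ε)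
    (hdetects : ¬ Detects (fun _ ↦ {H | Representable R H}) G q)
    (hLq : L + Fintype.card β * N ≤ q) (hqn : q ≤ n) (hLn : 4 * (L + Fintype.card β * N) ^ 2 ≤ n) :
    ε / 4 ≤ 1 / Fintype.card β + (N ^ 2 : ℕ) / n + (2 * (L + (L + 1) ^ D + 1) : ℕ) / N +
      (4 * Nat.log 2 N : ℕ) / L := by
  have : NeZero n := ⟨by have := NeZero.pos L; omega⟩
  have hι : Fintype.card (Fin L ⊕ β × ZMod N) = L + Fintype.card β * N := by simp [ZMod.card]
  have hrep : 1 / 4 ≤ prob fun ω : Sample (Fin n) L N β ↦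
      Representable R (G.induce (Set.range ω)) := by
    refine le_prob_range (A := fun S ↦ Representable R (G.induce S)) (q := q)
      (fun S T hST hT ↦ hT.induce_mono hST) ?_ ?_ ?_ ?_
    · rwa [hι]
    · rwa [Fintype.card_fin]
    · rwa [hι, Fintype.card_fin]
    · rw [Fintype.card_fin]
      exact choose_le_of_not_detects hdetects
  obtain ⟨l, hl⟩ := Sample.exists_prob_splits_le (N := N) (β := β) (NeZero.pos L) G
  have havg := hG.mul_prob_representable_le (L := L) (N := N) (β := β) (i := l) (R := R)
    (η := N ^ 2 / n + 2 * ((L + (L + 1) ^ D + 1 : ℕ) / N) + 2 * (2 * Nat.log 2 N / L))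
    (by positivity) fun b b' hb ↦ by
      have hbad := Sample.prob_bad_le (N := N) (G := G) hR l hb
      rw [Fintype.card_fin] at hbad
      linarith [hl b, hl b']
  calc ε / 4 = ε * (1 / 4) := by ring
    _ ≤ _ := mul_le_mul_of_nonneg_left hrep hε
    _ ≤ _ := havg
    _ = _ := by push_cast; ring

theorem exists_add_mul_le_two_pow (c d : ℕ) : ∃ a, c + d * a ≤ 2 ^ a := by
  refine ⟨2 * (c + 2 * d), ?_⟩
  have h := Nat.lt_two_pow_self (n := c + 2 * d)
  calc c + d * (2 * (c + 2 * d)) ≤ (c + 2 * d + 1) ^ 2 := by nlinarith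
    _ ≤ (2 ^ (c + 2 * d)) ^ 2 := by gcongr; omega
    _ = 2 ^ (2 * (c + 2 * d)) := by rw [← pow_mul, mul_comm]

theorem mul_block_growth_le {m : ℕ} (hm : 2 ≤ m) (a D : ℕ) :
    64 * m * (m ^ (a + 2) + (m ^ (a + 2) + 1) ^ D + 1) ≤ m ^ (8 + (a + 3) * (D + 1)) := by
  have hm0 : 0 < m := by omega
  have hL : m ^ (a + 2) + 1 ≤ m ^ (a + 3) := by
    have := Nat.one_le_pow (a + 2) m hm0
    rw [pow_succ m (a + 2)]
    nlinarith
  have hpow (k : ℕ) (hk : k ≤ D + 1) : (m ^ (a + 2) + 1) ^ k ≤ (m ^ (a + 3)) ^ (D + 1) :=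
    (Nat.pow_le_pow_left hL k).trans (Nat.pow_le_pow_right (by positivity) hk)
  calc _ = 2 ^ 6 * m * ((m ^ (a + 2) + 1) ^ 1 + (m ^ (a + 2) + 1) ^ D) := by ring
    _ ≤ m ^ 6 * m * ((m ^ (a + 3)) ^ (D + 1) + (m ^ (a + 3)) ^ (D + 1)) :=
      Nat.mul_le_mul (Nat.mul_le_mul_right m (Nat.pow_le_pow_left hm 6))
        (add_le_add (hpow 1 (by omega)) (hpow D (by omega)))
    _ = 2 * (m ^ 7 * (m ^ (a + 3)) ^ (D + 1)) := by ring
    _ ≤ m * (m ^ 7 * (m ^ (a + 3)) ^ (D + 1)) := by gcongr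
    _ = m ^ (8 + (a + 3) * (D + 1)) := by ring

theorem four_mul_sq_sample_size_le {m : ℕ} (hm : 2 ≤ m) (a e : ℕ) :
    4 * (m ^ (a + 2) + 32 * m * m ^ e) ^ 2 ≤ m ^ (2 * (a + e + 9) + 2) := by
  have hm0 : 0 < m := by omega
  have hsum : m ^ (a + 2) + 32 * m * m ^ e ≤ m ^ (a + e + 9) := calc
    _ ≤ m ^ (a + e + 8) + m ^ 5 * m * m ^ e := by
      gcongr ?_ + ?_ * m * _
      · exact Nat.pow_le_pow_right hm0 (by omega)
      · exact Nat.pow_le_pow_left hm 5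
    _ = m ^ (a + e + 8) + m ^ (6 + e) := by ring
    _ ≤ m ^ (a + e + 8) + m ^ (a + e + 8) :=
      Nat.add_le_add_left (Nat.pow_le_pow_right hm0 (by omega)) _
    _ = 2 * m ^ (a + e + 8) := by ring
    _ ≤ m * m ^ (a + e + 8) := by gcongr
    _ = m ^ (a + e + 9) := by ring
  calc _ ≤ m ^ 2 * (m ^ (a + e + 9)) ^ 2 := by
        gcongr
        exact Nat.pow_le_pow_left hm 2
    _ = _ := by ring

theorem exists_sample_size (D : ℕ) : ∃ w : ℕ, ∀ m : ℕ, 2 ≤ m → ∃ L N : ℕ, 0 < L ∧ 0 < N ∧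
    128 * m * Nat.log 2 N ≤ L ∧ 64 * m * (L + (L + 1) ^ D + 1) ≤ N ∧
    4 * (L + 32 * m * N) ^ 2 ≤ m ^ w := by
  obtain ⟨a, ha⟩ := exists_add_mul_le_two_pow (128 * (8 + 3 * (D + 1))) (128 * (D + 1))
  let e := 8 + (a + 3) * (D + 1)
  refine ⟨2 * (a + e + 9) + 2, fun m hm ↦ ⟨m ^ (a + 2), m ^ e, by positivity, by positivity, ?_,
    mul_block_growth_le hm a D, four_mul_sq_sample_size_le hm a e⟩⟩
  have hlog : Nat.log 2 (m ^ e) ≤ m * e := by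
    rw [← Nat.log_pow one_lt_two (m * e), pow_mul]
    exact Nat.log_mono_right (Nat.pow_le_pow_left Nat.lt_two_pow_self.le e)
  calc 128 * m * Nat.log 2 (m ^ e) ≤ 128 * m * (m * e) := by gcongr
    _ = (128 * (8 + 3 * (D + 1)) + 128 * (D + 1) * a) * m ^ 2 := by ring
    _ ≤ m ^ a * m ^ 2 := by gcongr; exact ha.trans (Nat.pow_le_pow_left hm a)
    _ = m ^ (a + 2) := by ring

theorem semi_algebraic_easily_testable_general (hR : PolynomialGrowth R D) :
    EasilyTestable fun _ ↦ {G | Representable R G} := by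
  obtain ⟨w, hw⟩ := exists_sample_size D
  refine easilyTestable_of_detects w fun m n q hm hwq hqn G hG ↦ by_contra fun hdetects ↦ ?_
  obtain ⟨L, N, hL, hN, hlog, hgrowth, hsize⟩ := hw m hm
  have : NeZero L := ⟨hL.ne'⟩
  have : NeZero N := ⟨hN.ne'⟩
  have : NeZero (32 * m) := ⟨by omega⟩
  have hle := hG.le_of_not_detects hR (β := Fin (32 * m)) (L := L) (N := N) (by positivity)
    hdetects (by rw [Fintype.card_fin]; nlinarith) hqn
    (by rw [Fintype.card_fin]; exact hsize.trans (hwq.trans hqn))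
  rw [Fintype.card_fin] at hle
  have hn : 32 * m * N ^ 2 ≤ n := calc
    _ ≤ (32 * m) ^ 2 * N ^ 2 := Nat.mul_le_mul_right _ (Nat.le_self_pow two_ne_zero _)
    _ = (32 * m * N) ^ 2 := (mul_pow _ _ 2).symm
    _ ≤ (L + 32 * m * N) ^ 2 := Nat.pow_le_pow_left (Nat.le_add_left _ _) 2
    _ ≤ 4 * (L + 32 * m * N) ^ 2 := Nat.le_mul_of_pos_left _ four_pos
    _ ≤ n := hsize.trans (hwq.trans hqn)
  have hshare {x y : ℕ} (hy : 0 < y) (hxy : 32 * m * x ≤ y) :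
      (x : ℝ) / y ≤ 1 / (32 * m : ℕ) := by
    rw [div_le_div_iff₀ (Nat.cast_pos.2 hy) (Nat.cast_pos.2 (NeZero.pos _))]
    exact_mod_cast (by linarith : x * (32 * m) ≤ 1 * y)
  have hcollision := hshare (hn.trans_lt' (by positivity)) hn
  have hmate := hshare (x := 2 * (L + (L + 1) ^ D + 1)) hN (by linarith)
  have hsplit := hshare (x := 4 * Nat.log 2 N) hL (by linarith)
  have heighth : 1 / (m : ℝ) / 4 = 8 * (1 / (32 * m : ℕ)) := by
    push_cast
    ring
  have hpos : 0 < 1 / ((32 * m : ℕ) : ℝ) := one_div_pos.2 (Nat.cast_pos.2 (NeZero.pos _))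
  linarith

end Testing

/-- Every semi-algebraic graph property is easily testable. -/
theorem semi_algebraic_easily_testable (k t : ℕ) (hk : 1 ≤ k) (ht : 1 ≤ t)
    (f : Fin t → MvPolynomial (Fin k ⊕ Fin k) ℝ) (Φ : (Fin t → Bool) → Bool) :
    EasilyTestable (SemiAlgebraicProp k t f Φ) :=
  semi_algebraic_easily_testable_general <|
    .bool (fun i ↦ polynomialGrowth_eval_nonneg (f i)) Φ

end
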